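/- Let n ≥ 1, let S_n act on ℝ^n by permuting coordinates, and let C = { v ↦ x·v + y𝟙 : x, y ∈ ℝ } ⊆ Aff_{S_n}(ℝ^n, ℝ^n) be the layer space of width-1 convolutional filters, where 𝟙 = (1,…,1)ᵀ. Assume σ : ℝ → ℝ is continuous and not a polynomial, and let d ≥ 2. Then U(C, …, C) (d copies of C) = { (x_1, …, x_n) ↦ (f(x_1), …, f(x_n)) : f ∈ C(ℝ, ℝ) }, and for n ≥ 2 this set is a proper subset of C_{S_n}(ℝ^n, ℝ^n), the space of continuous S_n-equivariant maps ℝ^n → ℝ^n. -/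

import Mathlib

open scoped BigOperators

noncomputable section EquivUnivPreamble

/-- Point-wise activation: apply `σ` coordinatewise. -/
def act (σ : ℝ → ℝ) {Z : Type} (v : Z → ℝ) : Z → ℝ := fun z => σ (v z)

/-- The action of a group element `g` on a real-valued function `v : Y → ℝ` induced by a
`G`-action on `Y` (the permutation representation `ℝ^Y`): `(g • v) y = v (g⁻¹ • y)`. -/
def pSMul {G Y : Type} [Group G] [MulAction G Y] (g : G) (v : Y → ℝ) : Y → ℝ :=
  fun y => v (g⁻¹ • y)

/-- `G`-equivariance of a map between permutation representations. -/
def Equivariant (G : Type) [Group G] {Y Z : Type} [MulAction G Y] [MulAction G Z]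
    (f : (Y → ℝ) → (Z → ℝ)) : Prop :=
  ∀ (g : G) (v : Y → ℝ), f (pSMul g v) = pSMul g (f v)

/-- A map between permutation representations is affine. -/
def IsAffine {Y Z : Type} (f : (Y → ℝ) → (Z → ℝ)) : Prop :=
  ∃ (φ : (Y → ℝ) →ₗ[ℝ] (Z → ℝ)) (b : Z → ℝ), ∀ v, f v = φ v + b

/-- A layer space: the set of maps `v ↦ ∑ᵢ cᵢ φⁱ(v) + b` where `φ¹, …, φᵏ` are fixed
`G`-equivariant linear maps and the bias `b` ranges over all functions constant on
`G`-orbits (i.e. all `∑ⱼ yⱼ 1_{Xⱼ}` with `Xⱼ` the orbits). -/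
def IsLayerSpace (G : Type) [Group G] {Y Z : Type} [MulAction G Y] [MulAction G Z]
    (M : Set ((Y → ℝ) → (Z → ℝ))) : Prop :=
  ∃ (k : ℕ) (φ : Fin k → ((Y → ℝ) →ₗ[ℝ] (Z → ℝ))),
    (∀ i, Equivariant G (φ i : (Y → ℝ) → (Z → ℝ))) ∧
    M = { f | ∃ (c : Fin k → ℝ) (b : Z → ℝ),
            (∀ (g : G) (z : Z), b (g • z) = b z) ∧
            ∀ v, f v = (∑ i, c i • φ i v) + b }

/-- `M^{k×h}`: the layer space `M` with input multiplicity `k` and output multiplicity `h`,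
`(v₁,…,v_k) ↦ (∑ⱼ f_{1,j}(vⱼ), …, ∑ⱼ f_{h,j}(vⱼ))`, identifying `V ⊗ ℝᵏ` with
`Fin k × Y → ℝ`. -/
def layerPow {Y Z : Type} (M : Set ((Y → ℝ) → (Z → ℝ))) (k h : ℕ) :
    Set ((Fin k × Y → ℝ) → (Fin h × Z → ℝ)) :=
  { F | ∃ f : Fin h → Fin k → ((Y → ℝ) → (Z → ℝ)),
      (∀ i j, f i j ∈ M) ∧
      ∀ (v : Fin k × Y → ℝ) (p : Fin h × Z), F v p = ∑ j, f p.1 j (fun y => v (j, y)) p.2 }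

/-- `M^{1×h}` under the canonical identification `V ⊗ ℝ¹ ≅ V` of the input. -/
def layerPowIn {Y Z : Type} (M : Set ((Y → ℝ) → (Z → ℝ))) (h : ℕ) :
    Set ((Y → ℝ) → (Fin h × Z → ℝ)) :=
  { F | ∃ f : Fin h → ((Y → ℝ) → (Z → ℝ)), (∀ i, f i ∈ M) ∧
      ∀ (v : Y → ℝ) (p : Fin h × Z), F v p = f p.1 v p.2 }

/-- `M^{k×1}` under the canonical identification `W ⊗ ℝ¹ ≅ W` of the output. -/
def layerPowOut {Y Z : Type} (M : Set ((Y → ℝ) → (Z → ℝ))) (k : ℕ) :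
    Set ((Fin k × Y → ℝ) → (Z → ℝ)) :=
  { F | ∃ f : Fin k → ((Y → ℝ) → (Z → ℝ)), (∀ j, f j ∈ M) ∧
      ∀ (v : Fin k × Y → ℝ) (z : Z), F v z = ∑ j, f j (fun y => v (j, y)) z }

/-- Evaluation of a chain of `d+1` layers with the point-wise activation `σ` between
consecutive layers: `φ_d ∘ σ̃ ∘ ⋯ ∘ σ̃ ∘ φ_0`. -/
def chainEval (σ : ℝ → ℝ) : ∀ (d : ℕ) (Y : Fin (d + 2) → Type)
    (φ : ∀ i : Fin (d + 1), (Y i.castSucc → ℝ) → (Y i.succ → ℝ)),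
    (Y 0 → ℝ) → (Y (Fin.last (d + 1)) → ℝ)
  | 0, _, φ => φ 0
  | (d + 1), Y, φ => fun v =>
      φ (Fin.last (d + 1))
        (act σ (chainEval σ d (fun i : Fin (d + 2) => Y i.castSucc)
          (fun i : Fin (d + 1) => φ i.castSucc) v))

/-- The neural space `N(M₀, …, M_d)` of a chain of `d+1` layer spaces. -/
def NeuralSpace (σ : ℝ → ℝ) (d : ℕ) (Y : Fin (d + 2) → Type)
    (M : ∀ i : Fin (d + 1), Set ((Y i.castSucc → ℝ) → (Y i.succ → ℝ))) :
    Set ((Y 0 → ℝ) → (Y (Fin.last (d + 1)) → ℝ)) :=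
  { F | ∃ φ : ∀ i : Fin (d + 1), (Y i.castSucc → ℝ) → (Y i.succ → ℝ),
      (∀ i, φ i ∈ M i) ∧ F = chainEval σ d Y φ }

/-- All networks `N(M₀^{1×k₁}, M₁^{k₁×k₂}, …, M_d^{k_d×k})` for the chain `M₀,…,M_d`, with
arbitrary interior multiplicities and fixed output multiplicity `k` (union over the interior
multiplicities). -/
def WPre (σ : ℝ → ℝ) : ∀ (d : ℕ) (Y : Fin (d + 2) → Type)
    (M : ∀ i : Fin (d + 1), Set ((Y i.castSucc → ℝ) → (Y i.succ → ℝ))) (k : ℕ),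
    Set ((Y 0 → ℝ) → (Fin k × Y (Fin.last (d + 1)) → ℝ))
  | 0, _, M, k => layerPowIn (M 0) k
  | (d + 1), Y, M, k =>
      { F | ∃ (k' : ℕ) (g : (Y 0 → ℝ) → (Fin k' × Y (Fin.last (d + 1)).castSucc → ℝ)),
          g ∈ WPre σ d (fun i : Fin (d + 2) => Y i.castSucc)
                (fun i : Fin (d + 1) => M i.castSucc) k' ∧
          ∃ f ∈ layerPow (M (Fin.last (d + 1))) k' k,
          F = fun v => f (act σ (g v)) }

/-- The network space `N(M₀^{1×k}, M₁^{k×k}, …, M_d^{k×k})`: all multiplicities equal to `k`. -/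
def WFix (σ : ℝ → ℝ) : ∀ (d : ℕ) (Y : Fin (d + 2) → Type)
    (M : ∀ i : Fin (d + 1), Set ((Y i.castSucc → ℝ) → (Y i.succ → ℝ))) (k : ℕ),
    Set ((Y 0 → ℝ) → (Fin k × Y (Fin.last (d + 1)) → ℝ))
  | 0, _, M, k => layerPowIn (M 0) k
  | (d + 1), Y, M, k =>
      { F | ∃ g ∈ WFix σ d (fun i : Fin (d + 2) => Y i.castSucc)
                (fun i : Fin (d + 1) => M i.castSucc) k,
          ∃ f ∈ layerPow (M (Fin.last (d + 1))) k k,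
          F = fun v => f (act σ (g v)) }

/-- Closure in the topology of uniform convergence on compact sets. -/
def UnifClosure {A B : Type} [TopologicalSpace A] [PseudoMetricSpace B]
    (S : Set (A → B)) : Set (A → B) :=
  { F | ∀ K : Set A, IsCompact K → ∀ ε : ℝ, 0 < ε → ∃ g ∈ S, ∀ x ∈ K, dist (F x) (g x) < ε }

/-- Separation relation of a family of functions. -/
def sepRel {A B : Type} (S : Set (A → B)) : Set (A × A) :=
  { p | ∀ f ∈ S, f p.1 = f p.2 }

/-- Entry-wise separation relation at the output entry `z`. -/
def sepRelAt {A Z : Type} (S : Set (A → (Z → ℝ))) (z : Z) : Set (A × A) :=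
  { p | ∀ f ∈ S, f p.1 z = f p.2 z }

/-- `C_ρ(A, B)`: continuous functions respecting the relation `ρ`. -/
def Crho {A B : Type} [TopologicalSpace A] [TopologicalSpace B] (ρ : Set (A × A)) :
    Set (A → B) :=
  { f | Continuous f ∧ ∀ p ∈ ρ, f p.1 = f p.2 }

/-- `C_ρ̄(A, ℝ^Z)` for a family of entry-wise relations `ρ̄ = (ρ_z)_{z ∈ Z}`. -/
def CrhoEntryRel {A Z : Type} [TopologicalSpace A] (ρ : Z → Set (A × A)) :
    Set (A → (Z → ℝ)) :=
  { f | Continuous f ∧ ∀ (z : Z), ∀ p ∈ ρ z, f p.1 z = f p.2 z }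

/-- `σ` is not a polynomial function. -/
def NotPolynomial (σ : ℝ → ℝ) : Prop :=
  ¬ ∃ p : Polynomial ℝ, ∀ x : ℝ, σ x = Polynomial.eval x p

/-- `c+1` widened copies of the layer space `M ⊆ Aff_G(ℝ^Z, ℝ^Z)`, from input multiplicity
`kin` to output multiplicity `kout` (union over interior multiplicities). -/
def WRep (σ : ℝ → ℝ) {Z : Type} (M : Set ((Z → ℝ) → (Z → ℝ))) :
    ∀ (_c kin kout : ℕ), Set ((Fin kin × Z → ℝ) → (Fin kout × Z → ℝ))
  | 0, kin, kout => layerPow M kin kout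
  | (c + 1), kin, kout =>
      { F | ∃ k, ∃ g ∈ WRep σ M c kin k, ∃ f ∈ layerPow M k kout,
          F = fun v => f (act σ (g v)) }

/-- `c+1` widened copies of `M`, starting at input multiplicity `kin` and ending with
output multiplicity `1` (canonically identified with `ℝ^Z`). -/
def WRepOut (σ : ℝ → ℝ) {Z : Type} (M : Set ((Z → ℝ) → (Z → ℝ))) :
    ∀ (_c kin : ℕ), Set ((Fin kin × Z → ℝ) → (Z → ℝ))
  | 0, kin => layerPowOut M kin
  | (c + 1), kin =>
      { F | ∃ k, ∃ g ∈ WRep σ M c kin k, ∃ f ∈ layerPowOut M k,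
          F = fun v => f (act σ (g v)) }

/-- `c+1` widened copies of `M`, with input multiplicity `1` (identified with `ℝ^Z`) and
output multiplicity `k`. -/
def WRepIn (σ : ℝ → ℝ) {Z : Type} (M : Set ((Z → ℝ) → (Z → ℝ))) :
    ∀ (_c k : ℕ), Set ((Z → ℝ) → (Fin k × Z → ℝ))
  | 0, k => layerPowIn M k
  | (c + 1), k =>
      { F | ∃ k', ∃ g ∈ WRepIn σ M c k', ∃ f ∈ layerPow M k' k,
          F = fun v => f (act σ (g v)) }

/-- The universality class `U(M, …, M)` of `c+2` copies of a layer space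
`M ⊆ Aff_G(ℝ^Z, ℝ^Z)`. -/
def UClassRep (σ : ℝ → ℝ) {Z : Type} [Fintype Z] (M : Set ((Z → ℝ) → (Z → ℝ))) (c : ℕ) :
    Set ((Z → ℝ) → (Z → ℝ)) :=
  UnifClosure { F | ∃ k, ∃ g ∈ WRepIn σ M c k, ∃ f ∈ layerPowOut M k,
      F = fun v => f (act σ (g v)) }

/-- The universality class `U(M₀, …, M_d, M, …, M)` of the chain `M₀, …, M_d` followed by
`c+1` copies of `M`. -/
def UClassPreRep (σ : ℝ → ℝ) (d : ℕ) (Y : Fin (d + 2) → Type)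
    [Fintype (Y (Fin.last (d + 1)))]
    (Mpre : ∀ i : Fin (d + 1), Set ((Y i.castSucc → ℝ) → (Y i.succ → ℝ)))
    (M : Set ((Y (Fin.last (d + 1)) → ℝ) → (Y (Fin.last (d + 1)) → ℝ))) (c : ℕ) :
    Set ((Y 0 → ℝ) → (Y (Fin.last (d + 1)) → ℝ)) :=
  UnifClosure { F | ∃ k, ∃ g ∈ WPre σ d Y Mpre k, ∃ f ∈ WRepOut σ M c k,
      F = fun v => f (act σ (g v)) }

/-- The universality class `U(M₀, …, M_d, N)` of the chain `M₀, …, M_d` followed by one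
extra layer space `N`. -/
def UClassApp1 (σ : ℝ → ℝ) (d : ℕ) (Y : Fin (d + 2) → Type)
    (M : ∀ i : Fin (d + 1), Set ((Y i.castSucc → ℝ) → (Y i.succ → ℝ)))
    {Z : Type} [Fintype Z]
    (N : Set ((Y (Fin.last (d + 1)) → ℝ) → (Z → ℝ))) : Set ((Y 0 → ℝ) → (Z → ℝ)) :=
  UnifClosure { F | ∃ k, ∃ g ∈ WPre σ d Y M k, ∃ f ∈ layerPowOut N k,
      F = fun v => f (act σ (g v)) }

/-- The universality class `U(M₀, …, M_d, N₁, N₂)` of the chain `M₀, …, M_d` followed by two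
extra layer spaces `N₁, N₂`. -/
def UClassApp2 (σ : ℝ → ℝ) (d : ℕ) (Y : Fin (d + 2) → Type)
    (M : ∀ i : Fin (d + 1), Set ((Y i.castSucc → ℝ) → (Y i.succ → ℝ)))
    {Z₁ Z₂ : Type} [Fintype Z₂]
    (N₁ : Set ((Y (Fin.last (d + 1)) → ℝ) → (Z₁ → ℝ)))
    (N₂ : Set ((Z₁ → ℝ) → (Z₂ → ℝ))) : Set ((Y 0 → ℝ) → (Z₂ → ℝ)) :=
  UnifClosure { F | ∃ k₁, ∃ g ∈ WPre σ d Y M k₁, ∃ k₂, ∃ m ∈ layerPow N₁ k₁ k₂,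
      ∃ f ∈ layerPowOut N₂ k₂, F = fun v => f (act σ (m (act σ (g v)))) }

/-- The universality class `U(M₁, M₂, M₃)` of three layer spaces on a common space `ℝ^Z`. -/
def UClass3 (σ : ℝ → ℝ) {Z : Type} [Fintype Z] (M₁ M₂ M₃ : Set ((Z → ℝ) → (Z → ℝ))) :
    Set ((Z → ℝ) → (Z → ℝ)) :=
  UnifClosure { F | ∃ k₁ k₂, ∃ g ∈ layerPowIn M₁ k₁, ∃ m ∈ layerPow M₂ k₁ k₂,
      ∃ f ∈ layerPowOut M₃ k₂, F = fun v => f (act σ (m (act σ (g v)))) }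

/-- The invariant layer space `I = Aff_G(ℝ^Y, ℝ)`: all `G`-invariant affine maps, with `ℝ`
realized as the trivial permutation representation `ℝ^{Unit}`. -/
def InvAff (G : Type) [Group G] {Y : Type} [MulAction G Y] :
    Set ((Y → ℝ) → (Unit → ℝ)) :=
  { f | IsAffine f ∧ ∀ (g : G) (v : Y → ℝ), f (pSMul g v) = f v }

/-- The fully connected layer space `L = Aff(ℝ, ℝ)`, with `ℝ` realized as `ℝ^{Unit}`. -/
def Lfull : Set ((Unit → ℝ) → (Unit → ℝ)) :=
  { f | ∃ a b : ℝ, f = fun v _ => a * v () + b }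

/-- The width-1 convolutional layer space `C ⊆ Aff_G(ℝ^X, ℝ^X)`:
`v ↦ a·v + (bias constant on `G`-orbits)`, i.e. `v ↦ a·v + ∑ⱼ yⱼ 1_{Xⱼ}`. -/
def ConvG (G : Type) [Group G] {X : Type} [MulAction G X] : Set ((X → ℝ) → (X → ℝ)) :=
  { f | ∃ (a : ℝ) (b : X → ℝ), (∀ (g : G) (z : X), b (g • z) = b z) ∧
      f = fun v z => a * v z + b z }

/-- The width-1 convolutional layer space for `S_n` acting on `ℝ^n`:
`C = { v ↦ a·v + b𝟙 }`. -/
def ConvC (n : ℕ) : Set ((Fin n → ℝ) → (Fin n → ℝ)) :=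
  { f | ∃ a b : ℝ, f = fun v i => a * v i + b }

/-- The PointNet (DeepSets) layer space for `S_n` acting on `ℝ^n`:
`P = { v ↦ (a·Id + c·𝟙𝟙ᵀ) v + b𝟙 }`. -/
def PointNetP (n : ℕ) : Set ((Fin n → ℝ) → (Fin n → ℝ)) :=
  { f | ∃ a c b : ℝ, f = fun v i => a * v i + c * (∑ j, v j) + b }
end EquivUnivPreamble

/-!
Convolutional layers of width one act on each coordinate separately, so a network computes
`v ↦ (f (v 1), …, f (v n))` with `f` a scalar network, and the theorem reduces to the density of
scalar networks in `C(ℝ, ℝ)`.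

For shallow networks this is the theorem of Leshno, Lin, Pinkus and Schocken. On a compact set let
`M σ` be the closed span of the functions `x ↦ σ (a * x + b)`. If `F' = σ`, then integrating in `b`
shows that `M σ` contains `M (Δ_[h] F)`, and differentiating in `a` shows that `M (Δ_[h] F)`
contains `x * M (Δ_[h] σ)`; hence `x * M (Δ_[h] σ) ⊆ M σ`. A continuous function all of whose
differences are polynomials is a polynomial, so if `σ` is not a polynomial then neither is some
`Δ_[h] σ`, and by induction on `k` the monomial `x ^ k` lies in `M σ`.

A deeper network contains `σ ∘ s` for every `s` computed by one layer less. By density these `s`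
approximate all affine functions, so the deep networks approximate all shallow ones.
-/

section PolynomialDifferences

open Polynomial fwdDiff

theorem exists_comp_one_add_X_sub_self_eq {R : Type*} [CommRing R] [Algebra ℚ R] (p : R[X]) :
    ∃ q : R[X], q.comp (1 + X) - q = p := by
  induction p using Polynomial.induction_on' with
  | add p₁ p₂ h₁ h₂ =>
    obtain ⟨q₁, rfl⟩ := h₁
    obtain ⟨q₂, rfl⟩ := h₂
    exact ⟨q₁ + q₂, by rw [add_comp]; ring⟩
  | monomial n a =>
    have bernoulli_diff := congrArg (map (algebraMap ℚ R)) (bernoulli_comp_one_add_X (n + 1))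
    simp only [map_comp, Polynomial.map_add, Polynomial.map_one, map_X, nsmul_eq_mul,
      Polynomial.map_mul, Polynomial.map_natCast, Polynomial.map_pow, add_tsub_cancel_right]
      at bernoulli_diff
    have inv_mul : C (algebraMap ℚ R (n + 1)⁻¹) * ((n + 1 : ℕ) : R[X]) = 1 := by
      rw [← map_natCast C, ← map_natCast (algebraMap ℚ R), ← C_mul, ← map_mul, Nat.cast_succ,
        inv_mul_cancel₀ n.cast_add_one_ne_zero, map_one, C_1]
    refine ⟨C a * C (algebraMap ℚ R (n + 1)⁻¹) *
      (Polynomial.bernoulli (n + 1)).map (algebraMap ℚ R), ?_⟩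
    rw [mul_comp, mul_comp, C_comp, C_comp, bernoulli_diff, ← C_mul_X_pow_eq_monomial]
    linear_combination C a * X ^ n * inv_mul

theorem eq_C_of_periodic_eval {R : Type*} [CommRing R] [IsDomain R] [CharZero R] {p : R[X]} {c : R}
    (hp : Function.Periodic (fun x => p.eval x) c) (hc : c ≠ 0) : p = C (p.eval 0) := by
  refine eq_of_infinite_eval_eq _ _ (Set.infinite_of_injective_forall_mem
    (f := fun n : ℕ => n * c) (fun m n h => Nat.cast_injective (mul_right_cancel₀ hc h))
    fun n => ?_)
  simpa using hp.nat_mul_eq n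

theorem eq_of_periodic_of_fwdDiff_const {τ : ℝ → ℝ} (hτ : Continuous τ) {c : ℝ}
    (hp : Function.Periodic τ c) (hc : c ≠ 0) (hd : ∀ h x y, Δ_[h] τ x = Δ_[h] τ y) (x y : ℝ) :
    τ x = τ y := by
  obtain ⟨_, ⟨m, rfl⟩, hm⟩ :=
    (hp.compact_of_continuous hc hτ).exists_isGreatest (Set.range_nonempty τ)
  -- Equal differences make `τ m` the mean of the values at `z` and at its reflection through `m`.
  have eq_max : ∀ z, τ z = τ m := fun z => by
    have right_le := hm ⟨z, rfl⟩
    have left_le := hm ⟨m - (z - m), rfl⟩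
    have diff_eq := hd (z - m) m (m - (z - m))
    simp only [fwdDiff, add_sub_cancel, sub_add_cancel] at diff_eq
    linarith
  rw [eq_max x, eq_max y]

theorem exists_eval_eq_of_forall_fwdDiff {σ : ℝ → ℝ} (hσ : Continuous σ)
    (hd : ∀ h, ∃ p : ℝ[X], ∀ x, Δ_[h] σ x = p.eval x) : ∃ p : ℝ[X], ∀ x, σ x = p.eval x := by
  obtain ⟨p, hp⟩ := hd 1
  obtain ⟨q, rfl⟩ := exists_comp_one_add_X_sub_self_eq p
  set τ : ℝ → ℝ := fun x => σ x - q.eval x with hτ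
  have τ_periodic : Function.Periodic τ 1 := fun x => by
    have := hp x
    simp only [fwdDiff, eval_sub, eval_comp, eval_add, eval_one, eval_X, add_comm 1 x] at this
    simp only [hτ]
    linarith
  have τ_fwdDiff_const : ∀ h x y, Δ_[h] τ x = Δ_[h] τ y := fun h => by
    obtain ⟨r, hr⟩ := hd h
    have eval_eq : Δ_[h] τ = fun x => (r - (q.comp (X + C h) - q)).eval x := funext fun x => by
      have := hr x
      simp only [fwdDiff, hτ, eval_sub, eval_comp, eval_add, eval_X, eval_C] at this ⊢
      linarith
    have fwdDiff_periodic : Function.Periodic (Δ_[h] τ) 1 := fun x => by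
      simp only [fwdDiff, add_right_comm x 1 h, τ_periodic (x + h), τ_periodic x]
    rw [eval_eq] at fwdDiff_periodic ⊢
    rw [eq_C_of_periodic_eval fwdDiff_periodic one_ne_zero]
    simp
  refine ⟨q + C (τ 0), fun x => ?_⟩
  rw [eval_add, eval_C, ← eq_of_periodic_of_fwdDiff_const (by fun_prop) τ_periodic one_ne_zero
    τ_fwdDiff_const x 0]
  simp only [hτ]
  ring

/-- The forward difference `Δ_[h] σ` of a continuous function, as a continuous function. -/
def continuousFwdDiff (h : ℝ) (σ : C(ℝ, ℝ)) : C(ℝ, ℝ) where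
  toFun := Δ_[h] σ
  continuous_toFun := by unfold fwdDiff; fun_prop

theorem NotPolynomial.exists_continuousFwdDiff {σ : C(ℝ, ℝ)} (hσ : NotPolynomial σ) :
    ∃ h, NotPolynomial (continuousFwdDiff h σ) := by
  by_contra! hd
  exact hσ (exists_eval_eq_of_forall_fwdDiff σ.continuous fun h => not_not.1 (hd h))

theorem NotPolynomial.exists_ne_zero {σ : ℝ → ℝ} (hσ : NotPolynomial σ) : ∃ x, σ x ≠ 0 := by
  by_contra! hzero
  exact hσ ⟨0, by simpa using hzero⟩

end PolynomialDifferences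

section CurvesInNormedSpaces

variable {E : Type*} [NormedAddCommGroup E] [NormedSpace ℝ E]

theorem mem_of_hasDerivAt_of_isClosed {M : Submodule ℝ E} (hM : IsClosed (M : Set E))
    {c : ℝ → E} {c' : E} {t : ℝ} (hc : HasDerivAt c c' t) (hcM : ∀ s, c s ∈ M) : c' ∈ M := by
  have hspan := range_deriv_subset_closure_span_image c dense_univ ⟨t, hc.deriv⟩
  refine closure_minimal (Submodule.span_le.2 ?_) hM hspan
  rintro _ ⟨s, -, rfl⟩
  exact hcM s

theorem sub_mem_of_hasDerivAt_of_isClosed {M : Submodule ℝ E} (hM : IsClosed (M : Set E))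
    {c c' : ℝ → E} (hc : ∀ t, HasDerivAt c (c' t) t) (hc' : ∀ t, c' t ∈ M) (s t : ℝ) :
    c t - c s ∈ M := by
  have hd : ∀ r, HasDerivAt (fun r => M.mkQL (c r)) 0 r := fun r => by
    have := M.mkQL.hasFDerivAt.comp_hasDerivAt r (hc r)
    rwa [Submodule.mkQL_apply, Submodule.mkQ_apply,
      (Submodule.Quotient.mk_eq_zero M).2 (hc' r)] at this
  exact (Submodule.Quotient.eq M).1
    (is_const_of_deriv_eq_zero (fun r => (hd r).differentiableAt) (fun r => (hd r).deriv) t s)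

variable [CompleteSpace E] {X : Type*} [TopologicalSpace X] [CompactSpace X]

theorem hasDerivAt_of_forall_hasDerivAt_apply {c c' : ℝ → C(X, E)} (hc' : Continuous c')
    (hc : ∀ t x, HasDerivAt (fun s => c s x) (c' t x) t) (t : ℝ) : HasDerivAt c (c' t) t := by
  have integral_eq : ∀ u, ∫ s in (0 : ℝ)..u, c' s = c u - c 0 := fun u => by
    ext x
    have hx : Continuous fun s => c' s x := (ContinuousMap.evalCLM ℝ x).continuous.comp hc'
    calc (∫ s in (0 : ℝ)..u, c' s) x = ∫ s in (0 : ℝ)..u, c' s x :=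
          ((ContinuousMap.evalCLM ℝ x).intervalIntegral_comp_comm (hc'.intervalIntegrable 0 u)).symm
      _ = c u x - c 0 x := intervalIntegral.integral_eq_sub_of_hasDerivAt
          (fun s _ => hc s x) (hx.intervalIntegrable 0 u)
  have hderiv := (hc'.integral_hasStrictDerivAt 0 t).hasDerivAt.add_const (c 0)
  simpa only [integral_eq, sub_add_cancel] using hderiv

theorem hasDerivAt_comp_add_smul {F σ : C(ℝ, ℝ)} (hF : ∀ y, HasDerivAt F (σ y) y)
    (f g : C(X, ℝ)) (t : ℝ) :
    HasDerivAt (fun s : ℝ => F.comp (f + s • g)) (g * σ.comp (f + t • g)) t := by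
  refine hasDerivAt_of_forall_hasDerivAt_apply
    (c' := fun t : ℝ => g * σ.comp (f + t • g)) ?_ (fun t x => ?_) t
  · have : Continuous fun t : ℝ => f + t • g := by fun_prop
    exact continuous_const.mul (σ.continuous_postcomp.comp this)
  · have inner : HasDerivAt (fun s : ℝ => f x + s * g x) (g x) t := by
      simpa using ((hasDerivAt_id t).mul_const (g x)).const_add (f x)
    simpa [mul_comm, Function.comp_def] using (hF (f x + t * g x)).comp t inner

end CurvesInNormedSpaces

section CompactConvergence

theorem mem_closure_iff_forall_isCompact {A B : Type*} [TopologicalSpace A] [PseudoMetricSpace B]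
    {S : Set C(A, B)} {f : C(A, B)} :
    f ∈ closure S ↔ ∀ K : Set A, IsCompact K → ∀ ε > 0, ∃ g ∈ S, ∀ x ∈ K, dist (f x) (g x) < ε := by
  rw [mem_closure_iff_nhds_basis'
    (nhds_basis_uniformity' Metric.uniformity_basis_dist.compactConvergenceUniformity)]
  simp only [Prod.forall, and_imp]
  exact ⟨fun H K hK ε hε => (H K ε hK hε).imp fun _ hg => ⟨hg.2, hg.1⟩,
    fun H K ε hK hε => (H K hK ε hε).imp fun _ hg => ⟨hg.2, hg.1⟩⟩

end CompactConvergence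

section RidgeFunctions

variable {X : Type*} [TopologicalSpace X]

/-- The span of the functions `x ↦ σ (a * ι x + b)`: the shallow networks with activation `σ` on
the feature `ι`. -/
def ridgeSpan (ι : C(X, ℝ)) (σ : C(ℝ, ℝ)) : Submodule ℝ C(X, ℝ) :=
  Submodule.span ℝ (Set.range fun p : ℝ × ℝ => σ.comp (p.1 • ι + p.2 • 1))

theorem comp_affine_mem_ridgeSpan (ι : C(X, ℝ)) (σ : C(ℝ, ℝ)) (a b : ℝ) :
    σ.comp (a • ι + b • 1) ∈ ridgeSpan ι σ :=
  Submodule.subset_span ⟨(a, b), rfl⟩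

theorem ridgeSpan_comp {Y : Type*} [TopologicalSpace Y] (ι : C(X, ℝ)) (σ : C(ℝ, ℝ)) (j : C(Y, X)) :
    ridgeSpan (ι.comp j) σ =
      (ridgeSpan ι σ).map (ContinuousMap.compRightAlgHom ℝ ℝ j).toLinearMap := by
  rw [ridgeSpan, ridgeSpan, Submodule.map_span, ← Set.range_comp]
  rfl

section CompactSpace

variable [CompactSpace X]

theorem ridgeSpan_continuousFwdDiff_le {F σ : C(ℝ, ℝ)} (hF : ∀ y, HasDerivAt F (σ y) y)
    (ι : C(X, ℝ)) (h : ℝ) :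
    ridgeSpan ι (continuousFwdDiff h F) ≤ (ridgeSpan ι σ).topologicalClosure := by
  refine Submodule.span_le.2 ?_
  rintro _ ⟨⟨a, b⟩, rfl⟩
  have hmem := sub_mem_of_hasDerivAt_of_isClosed (ridgeSpan ι σ).isClosed_topologicalClosure
    (hasDerivAt_comp_add_smul hF (a • ι) 1)
    (fun t => by
      rw [one_mul]
      exact Submodule.le_topologicalClosure _ (comp_affine_mem_ridgeSpan ι σ a t)) b (b + h)
  have comp_eq : (continuousFwdDiff h F).comp (a • ι + b • 1) =
      F.comp (a • ι + (b + h) • 1) - F.comp (a • ι + b • 1) := by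
    ext x
    simp [continuousFwdDiff, fwdDiff, add_assoc]
  change (continuousFwdDiff h F).comp (a • ι + b • 1) ∈ (ridgeSpan ι σ).topologicalClosure
  rwa [comp_eq]

theorem mul_mem_closure_ridgeSpan_of_hasDerivAt {F σ : C(ℝ, ℝ)} (hF : ∀ y, HasDerivAt F (σ y) y)
    {ι f : C(X, ℝ)} (hf : f ∈ (ridgeSpan ι σ).topologicalClosure) :
    ι * f ∈ (ridgeSpan ι F).topologicalClosure := by
  have hle : (ridgeSpan ι σ).topologicalClosure ≤
      (ridgeSpan ι F).topologicalClosure.comap (LinearMap.mulLeft ℝ ι) := by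
    refine Submodule.topologicalClosure_minimal _ (Submodule.span_le.2 ?_)
      ((ridgeSpan ι F).isClosed_topologicalClosure.preimage (continuous_const_mul ι))
    rintro _ ⟨⟨a, b⟩, rfl⟩
    have hderiv := hasDerivAt_comp_add_smul hF (b • 1) ι a
    simp only [add_comm (b • (1 : C(X, ℝ)))] at hderiv
    exact mem_of_hasDerivAt_of_isClosed (ridgeSpan ι F).isClosed_topologicalClosure hderiv
      fun t => Submodule.le_topologicalClosure _ (comp_affine_mem_ridgeSpan ι F t b)
  exact hle hf

theorem mul_mem_closure_ridgeSpan_of_continuousFwdDiff {ι f : C(X, ℝ)} {σ : C(ℝ, ℝ)} {h : ℝ}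
    (hf : f ∈ (ridgeSpan ι (continuousFwdDiff h σ)).topologicalClosure) :
    ι * f ∈ (ridgeSpan ι σ).topologicalClosure := by
  set F : C(ℝ, ℝ) := ⟨fun y => ∫ t in (0 : ℝ)..y, σ t,
    intervalIntegral.continuous_primitive (fun a b => σ.continuous.intervalIntegrable a b) 0⟩
  have hF : ∀ y, HasDerivAt F (σ y) y := fun y =>
    (σ.continuous.integral_hasStrictDerivAt 0 y).hasDerivAt
  have hdiff : ∀ y, HasDerivAt (continuousFwdDiff h F) (continuousFwdDiff h σ y) y := fun y =>
    ((hF (y + h)).comp_add_const y h).sub (hF y)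
  exact Submodule.topologicalClosure_minimal _ (ridgeSpan_continuousFwdDiff_le hF ι h)
    (Submodule.isClosed_topologicalClosure _) (mul_mem_closure_ridgeSpan_of_hasDerivAt hdiff hf)

theorem pow_mem_closure_ridgeSpan (ι : C(X, ℝ)) {σ : C(ℝ, ℝ)} (hσ : NotPolynomial σ) (k : ℕ) :
    ι ^ k ∈ (ridgeSpan ι σ).topologicalClosure := by
  induction k generalizing σ with
  | zero =>
    obtain ⟨b, hb⟩ := hσ.exists_ne_zero
    have hone : ι ^ 0 = (σ b)⁻¹ • σ.comp ((0 : ℝ) • ι + b • 1) := by ext x; simp [hb]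
    rw [hone]
    exact Submodule.smul_mem _ _
      (Submodule.le_topologicalClosure _ (comp_affine_mem_ridgeSpan ι σ 0 b))
  | succ k ih =>
    obtain ⟨h, hh⟩ := hσ.exists_continuousFwdDiff
    rw [pow_succ']
    exact mul_mem_closure_ridgeSpan_of_continuousFwdDiff (ih hh)

theorem dense_ridgeSpan_of_compactSpace {ι : C(X, ℝ)} (hι : Function.Injective ι) {σ : C(ℝ, ℝ)}
    (hσ : NotPolynomial σ) : Dense (ridgeSpan ι σ : Set C(X, ℝ)) := by
  have adjoin_le : (Algebra.adjoin ℝ {ι} : Set C(X, ℝ)) ⊆ (ridgeSpan ι σ).topologicalClosure := by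
    intro f hf
    rw [SetLike.mem_coe, Algebra.adjoin_singleton_eq_range_aeval, AlgHom.mem_range] at hf
    obtain ⟨p, rfl⟩ := hf
    rw [Polynomial.aeval_eq_sum_range]
    exact Submodule.sum_mem _ fun k _ =>
      Submodule.smul_mem _ _ (pow_mem_closure_ridgeSpan ι hσ k)
  have separates : (Algebra.adjoin ℝ {ι}).SeparatesPoints := fun x y hxy =>
    ⟨ι, ⟨ι, Algebra.self_mem_adjoin_singleton ℝ ι, rfl⟩, hι.ne hxy⟩
  exact fun f => closure_minimal adjoin_le (Submodule.isClosed_topologicalClosure _)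
    (ContinuousMap.continuousMap_mem_subalgebra_closure_of_separatesPoints _ separates f)

end CompactSpace

theorem dense_ridgeSpan {ι : C(X, ℝ)} (hι : Function.Injective ι) {σ : C(ℝ, ℝ)}
    (hσ : NotPolynomial σ) : Dense (ridgeSpan ι σ : Set C(X, ℝ)) := by
  refine fun f => mem_closure_iff_forall_isCompact.2 fun K hK ε hε => ?_
  have : CompactSpace K := isCompact_iff_compactSpace.1 hK
  set j : C(K, X) := (ContinuousMap.id X).restrict K
  have hdense := dense_ridgeSpan_of_compactSpace (ι := ι.comp j)
    (hι.comp Subtype.val_injective) hσ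
  obtain ⟨_, hg, hfg⟩ := hdense.exists_dist_lt (f.comp j) hε
  rw [ridgeSpan_comp] at hg
  obtain ⟨g, hg, rfl⟩ := hg
  exact ⟨g, hg, fun x hx => (ContinuousMap.dist_apply_le_dist (⟨x, hx⟩ : K)).trans_lt hfg⟩

end RidgeFunctions

section ScalarNetworks

/-- The functions `ℝ → ℝ` computed by the scalar networks with activation `σ` and `c` hidden
layers. As in `layerPow`, the bias of a neuron is spread over its summands `σ ∘ s`. -/
def scalarNets (σ : C(ℝ, ℝ)) : ℕ → Submodule ℝ C(ℝ, ℝ)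
  | 0 => Submodule.span ℝ {ContinuousMap.id ℝ, 1}
  | c + 1 => Submodule.span ℝ (Set.range fun p : scalarNets σ c × ℝ => σ.comp p.1 + p.2 • 1)

theorem comp_mem_scalarNets_succ {σ s : C(ℝ, ℝ)} {c : ℕ} (hs : s ∈ scalarNets σ c) :
    σ.comp s ∈ scalarNets σ (c + 1) :=
  Submodule.subset_span ⟨(⟨s, hs⟩, 0), by simp⟩

theorem smul_comp_add_smul_one_mem_scalarNets_succ {σ s : C(ℝ, ℝ)} {c : ℕ}
    (hs : s ∈ scalarNets σ c) (a b : ℝ) : a • σ.comp s + b • 1 ∈ scalarNets σ (c + 1) := by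
  have hbias : σ.comp s + b • 1 ∈ scalarNets σ (c + 1) :=
    Submodule.subset_span ⟨(⟨s, hs⟩, b), rfl⟩
  have hcomp := comp_mem_scalarNets_succ hs
  convert add_mem (Submodule.smul_mem _ (a - 1) hcomp) hbias using 1
  module

theorem dense_scalarNets_succ_of_affine_mem_closure {σ : C(ℝ, ℝ)} (hσ : NotPolynomial σ) {c : ℕ}
    (haff : ∀ a b : ℝ, a • ContinuousMap.id ℝ + b • 1 ∈ closure (scalarNets σ c : Set C(ℝ, ℝ))) :
    Dense (scalarNets σ (c + 1) : Set C(ℝ, ℝ)) := by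
  have ridgeSpan_le : ridgeSpan (ContinuousMap.id ℝ) σ ≤
      (scalarNets σ (c + 1)).topologicalClosure := by
    refine Submodule.span_le.2 ?_
    rintro _ ⟨⟨a, b⟩, rfl⟩
    exact map_mem_closure σ.continuous_postcomp (haff a b) fun s hs => comp_mem_scalarNets_succ hs
  exact fun f => closure_minimal ridgeSpan_le (Submodule.isClosed_topologicalClosure _)
    (dense_ridgeSpan Function.injective_id hσ f)

theorem dense_scalarNets_succ {σ : C(ℝ, ℝ)} (hσ : NotPolynomial σ) (c : ℕ) :
    Dense (scalarNets σ (c + 1) : Set C(ℝ, ℝ)) := by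
  induction c with
  | zero =>
    exact dense_scalarNets_succ_of_affine_mem_closure hσ fun a b =>
      subset_closure (Submodule.mem_span_pair.2 ⟨a, b, rfl⟩)
  | succ c ih => exact dense_scalarNets_succ_of_affine_mem_closure hσ fun _ _ => ih _

end ScalarNetworks

section PointwiseMaps

/-- The point-wise maps `v ↦ (f (v z))_z` of `ℝ^Z` with `f ∈ S`. Networks of width-one convolutions
compute such maps, with `S` the scalar networks. -/
def pointwiseMaps (Z : Type) (S : Set C(ℝ, ℝ)) : Set ((Z → ℝ) → (Z → ℝ)) :=
  (fun f : C(ℝ, ℝ) => act f) '' S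

theorem pointwiseMaps_univ_eq (Z : Type) :
    pointwiseMaps Z Set.univ = {F | ∃ f : ℝ → ℝ, Continuous f ∧ F = fun v z => f (v z)} := by
  ext F
  constructor
  · rintro ⟨f, -, rfl⟩
    exact ⟨f, f.continuous, rfl⟩
  · rintro ⟨f, hf, rfl⟩
    exact ⟨⟨f, hf⟩, trivial, rfl⟩

theorem pointwiseMaps_ssubset_equivariant {Z : Type} [Finite Z] [Nontrivial Z] :
    pointwiseMaps Z Set.univ ⊂ {F | Continuous F ∧ Equivariant (Equiv.Perm Z) F} := by
  have := Fintype.ofFinite Z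
  refine Set.ssubset_iff_of_subset ?_ |>.2 ⟨fun v _ => ∑ z, v z, ⟨by fun_prop, fun g v => ?_⟩, ?_⟩
  · rintro _ ⟨f, -, rfl⟩
    exact ⟨continuous_pi fun z => f.continuous.comp (continuous_apply z), fun _ _ => rfl⟩
  · exact funext fun _ => Equiv.sum_comp g⁻¹ v
  · rintro ⟨f, -, hf⟩
    classical
    obtain ⟨z, z', hz⟩ := exists_pair_ne Z
    have at_zero : f 0 = 0 := by simpa [act] using congrFun (congrFun hf 0) z
    have at_single : f 0 = 1 := by
      simpa [act, hz] using congrFun (congrFun hf (Pi.single z' 1)) z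
    exact zero_ne_one (at_zero.symm.trans at_single)

variable {Z : Type} [Fintype Z]

theorem pointwiseMaps_closure_subset_unifClosure (S : Set C(ℝ, ℝ)) :
    pointwiseMaps Z (closure S) ⊆ UnifClosure (pointwiseMaps Z S) := by
  rintro _ ⟨f, hf, rfl⟩ K hK ε hε
  have hcompact : IsCompact (⋃ z : Z, (fun v : Z → ℝ => v z) '' K) :=
    isCompact_iUnion fun z => hK.image (continuous_apply z)
  obtain ⟨g, hg, hfg⟩ := mem_closure_iff_forall_isCompact.1 hf _ hcompact ε hε
  exact ⟨act g, ⟨g, hg, rfl⟩, fun v hv => (dist_pi_lt_iff hε).2 fun z =>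
    hfg (v z) (Set.mem_iUnion.2 ⟨z, v, hv, rfl⟩)⟩

theorem apply_eq_of_mem_unifClosure_pointwiseMaps {S : Set C(ℝ, ℝ)} {F : (Z → ℝ) → (Z → ℝ)}
    (hF : F ∈ UnifClosure (pointwiseMaps Z S)) {v w : Z → ℝ} {z z' : Z} (h : v z = w z') :
    F v z = F w z' := by
  refine eq_of_forall_dist_le fun ε hε => ?_
  obtain ⟨_, ⟨f, -, rfl⟩, hf⟩ := hF {v, w} (Set.toFinite _).isCompact (ε / 2) (half_pos hε)
  have hv : dist (F v z) (f (w z')) < ε / 2 :=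
    h ▸ (dist_le_pi_dist _ _ z).trans_lt (hf v (by simp))
  have hw : dist (F w z') (f (w z')) < ε / 2 :=
    (dist_le_pi_dist _ _ z').trans_lt (hf w (by simp))
  linarith [dist_triangle_right (F v z) (F w z') (f (w z'))]

theorem continuous_of_mem_unifClosure {A B : Type} [TopologicalSpace A]
    [WeaklyLocallyCompactSpace A] [PseudoMetricSpace B] {S : Set (A → B)}
    (hS : ∀ g ∈ S, Continuous g) {F : A → B} (hF : F ∈ UnifClosure S) : Continuous F := by
  refine continuous_iff_continuousAt.2 fun x => ?_
  obtain ⟨K, hK, hxK⟩ := exists_compact_mem_nhds x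
  refine (continuousOn_of_uniform_approx_of_continuousOn fun u hu => ?_).continuousAt hxK
  obtain ⟨ε, hε, hεu⟩ := Metric.mem_uniformity_dist.1 hu
  obtain ⟨g, hg, hFg⟩ := hF K hK ε hε
  exact ⟨g, (hS g hg).continuousOn, fun y hy => hεu (hFg y hy)⟩

theorem unifClosure_pointwiseMaps [Nonempty Z] (S : Set C(ℝ, ℝ)) :
    UnifClosure (pointwiseMaps Z S) = pointwiseMaps Z (closure S) := by
  refine Set.Subset.antisymm (fun F hF => ?_) (pointwiseMaps_closure_subset_unifClosure S)
  obtain ⟨z⟩ := ‹Nonempty Z›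
  have hFc : Continuous F := continuous_of_mem_unifClosure (S := pointwiseMaps Z S) (by
    rintro _ ⟨f, -, rfl⟩
    exact continuous_pi fun z => f.continuous.comp (continuous_apply z)) hF
  refine ⟨⟨fun x => F (Function.const Z x) z, by fun_prop⟩,
    mem_closure_iff_forall_isCompact.2 fun K hK ε hε => ?_,
    funext fun v => funext fun z' => apply_eq_of_mem_unifClosure_pointwiseMaps hF rfl⟩
  obtain ⟨_, ⟨g, hg, rfl⟩, hFg⟩ := hF (Function.const Z '' K)
    (hK.image (continuous_pi fun _ => continuous_id)) ε hε
  exact ⟨g, hg, fun x hx =>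
    (dist_le_pi_dist _ _ z).trans_lt (hFg _ (Set.mem_image_of_mem _ hx))⟩

end PointwiseMaps

section NetworksOfConvolutions

theorem exists_forall_eq_sum_smul_of_mem_span_range {R E α J : Type*} [Semiring R]
    [AddCommMonoid E] [Module R E] [Finite J] (φ : α → E) (s : J → E)
    (hs : ∀ i, s i ∈ Submodule.span R (Set.range φ)) :
    ∃ (m : ℕ) (t : Fin m → α) (w : J → Fin m → R), ∀ i, s i = ∑ j, w i j • φ (t j) := by
  classical
  have := Fintype.ofFinite J
  choose w hw using fun i => Finsupp.mem_span_range_iff_exists_finsupp.1 (hs i)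
  set U : Finset α := Finset.univ.biUnion fun i => (w i).support
  refine ⟨U.card, fun j => U.equivFin.symm j, fun i j => w i (U.equivFin.symm j), fun i => ?_⟩
  rw [U.equivFin.symm.sum_comp (fun u : U => w i u • φ u),
    Finset.sum_coe_sort U (fun u => w i u • φ u), ← hw i]
  exact Finsupp.sum_of_support_subset _
    (Finset.subset_biUnion_of_mem (fun i => (w i).support) (Finset.mem_univ i)) _
    fun _ _ => zero_smul _ _

theorem mem_layerPow_ConvC_iff {n k h : ℕ} {F : (Fin k × Fin n → ℝ) → (Fin h × Fin n → ℝ)} :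
    F ∈ layerPow (ConvC n) k h ↔ ∃ a b : Fin h → Fin k → ℝ,
      ∀ v p, F v p = ∑ j, (a p.1 j * v (j, p.2) + b p.1 j) := by
  constructor
  · rintro ⟨f, hf, hF⟩
    choose a b hab using hf
    exact ⟨a, b, fun v p => by simp only [hF, hab]⟩
  · rintro ⟨a, b, hF⟩
    exact ⟨fun i j v z => a i j * v z + b i j, fun i j => ⟨a i j, b i j, rfl⟩, hF⟩

theorem mem_layerPowIn_ConvC_iff {n h : ℕ} {F : (Fin n → ℝ) → (Fin h × Fin n → ℝ)} :
    F ∈ layerPowIn (ConvC n) h ↔ ∃ a b : Fin h → ℝ, ∀ v p, F v p = a p.1 * v p.2 + b p.1 := by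
  constructor
  · rintro ⟨f, hf, hF⟩
    choose a b hab using hf
    exact ⟨a, b, fun v p => by simp only [hF, hab]⟩
  · rintro ⟨a, b, hF⟩
    exact ⟨fun i v z => a i * v z + b i, fun i => ⟨a i, b i, rfl⟩, hF⟩

theorem mem_WRepIn_ConvC_iff {n : ℕ} {σ : C(ℝ, ℝ)} {c k : ℕ}
    {F : (Fin n → ℝ) → (Fin k × Fin n → ℝ)} :
    F ∈ WRepIn σ (ConvC n) c k ↔
      ∃ s : Fin k → C(ℝ, ℝ), (∀ i, s i ∈ scalarNets σ c) ∧ ∀ v p, F v p = s p.1 (v p.2) := by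
  induction c generalizing k with
  | zero =>
    simp only [WRepIn, mem_layerPowIn_ConvC_iff, scalarNets, Submodule.mem_span_pair]
    constructor
    · rintro ⟨a, b, hF⟩
      exact ⟨fun i => a i • ContinuousMap.id ℝ + b i • 1, fun i => ⟨a i, b i, rfl⟩,
        fun v p => by simp [hF]⟩
    · rintro ⟨s, hs, hF⟩
      choose a b hab using hs
      exact ⟨a, b, fun v p => by simp [hF, ← hab]⟩
  | succ c ih =>
    constructor
    · rintro ⟨k', g, hg, f, hf, rfl⟩
      obtain ⟨s, hs, hgs⟩ := ih.1 hg
      obtain ⟨a, b, hf⟩ := mem_layerPow_ConvC_iff.1 hf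
      refine ⟨fun i => ∑ j, (a i j • σ.comp (s j) + b i j • 1), fun i => Submodule.sum_mem _
        fun j _ => smul_comp_add_smul_one_mem_scalarNets_succ (hs j) _ _, fun v p => ?_⟩
      simp [hf, act, hgs]
    · rintro ⟨s, hs, hF⟩
      obtain ⟨m, t, w, hw⟩ := exists_forall_eq_sum_smul_of_mem_span_range _ s hs
      refine ⟨m, fun v p => (t p.1).1.1 (v p.2), ih.2 ⟨_, fun j => (t j).1.2, fun _ _ => rfl⟩,
        fun u p => ∑ j, (w p.1 j * u (j, p.2) + w p.1 j * (t j).2),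
        mem_layerPow_ConvC_iff.2 ⟨_, fun i j => w i j * (t j).2, fun _ _ => rfl⟩,
        funext fun v => funext fun p => ?_⟩
      simp [hF, hw, act]

theorem mem_layerPowOut_iff {Y Z : Type} {M : Set ((Y → ℝ) → (Z → ℝ))} {k : ℕ}
    {F : (Fin k × Y → ℝ) → (Z → ℝ)} :
    F ∈ layerPowOut M k ↔ (fun v (p : Fin 1 × Z) => F v p.2) ∈ layerPow M k 1 := by
  constructor
  · rintro ⟨f, hf, hF⟩
    exact ⟨fun _ => f, fun _ => hf, fun v p => hF v p.2⟩
  · rintro ⟨f, hf, hF⟩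
    exact ⟨f 0, hf 0, fun v z => hF v (0, z)⟩

theorem exists_WRepIn_layerPowOut_iff {σ : ℝ → ℝ} {Z : Type} {M : Set ((Z → ℝ) → (Z → ℝ))} {c : ℕ}
    {F : (Z → ℝ) → (Z → ℝ)} :
    (∃ k, ∃ g ∈ WRepIn σ M c k, ∃ f ∈ layerPowOut M k, F = fun v => f (act σ (g v))) ↔
      (fun v (p : Fin 1 × Z) => F v p.2) ∈ WRepIn σ M (c + 1) 1 := by
  constructor
  · rintro ⟨k, g, hg, f, hf, rfl⟩
    exact ⟨k, g, hg, _, mem_layerPowOut_iff.1 hf, rfl⟩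
  · rintro ⟨k, g, hg, f, hf, hF⟩
    refine ⟨k, g, hg, fun u z => f u (0, z), mem_layerPowOut_iff.2 ?_,
      funext fun v => funext fun z => congrFun (congrFun hF v) (0, z)⟩
    have f_eq : (fun u (p : Fin 1 × Z) => f u (0, p.2)) = f :=
      funext fun u => funext fun ⟨i, z⟩ => by rw [Subsingleton.elim i 0]
    rwa [f_eq]

theorem setOf_WRepIn_layerPowOut_ConvC (n : ℕ) (σ : C(ℝ, ℝ)) (c : ℕ) :
    {F | ∃ k, ∃ g ∈ WRepIn σ (ConvC n) c k, ∃ f ∈ layerPowOut (ConvC n) k,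
      F = fun v => f (act σ (g v))} = pointwiseMaps (Fin n) (scalarNets σ (c + 1)) := by
  ext F
  rw [Set.mem_ofPred_eq, exists_WRepIn_layerPowOut_iff, mem_WRepIn_ConvC_iff]
  constructor
  · rintro ⟨s, hs, hF⟩
    exact ⟨s 0, hs 0, funext fun v => funext fun z => (hF v (0, z)).symm⟩
  · rintro ⟨s, hs, rfl⟩
    exact ⟨fun _ => s, fun _ => hs, fun _ _ => rfl⟩

theorem UClassRep_ConvC_eq_pointwiseMaps (n : ℕ) [NeZero n] {σ : C(ℝ, ℝ)} (hσ : NotPolynomial σ)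
    (c : ℕ) : UClassRep σ (ConvC n) c = pointwiseMaps (Fin n) Set.univ := by
  rw [UClassRep, setOf_WRepIn_layerPowOut_ConvC, unifClosure_pointwiseMaps,
    (dense_scalarNets_succ hσ c).closure_eq]

end NetworksOfConvolutions

/-- Proposition `prop:univ-class-1conv`: for `d ≥ 2`, the universality
class of `d` copies of the width-1 convolutional layer space `C` on `ℝ^n` is exactly the
set of coordinatewise maps `(x₁,…,x_n) ↦ (f(x₁),…,f(x_n))` with `f` continuous, and for
`n ≥ 2` this is a proper subset of the continuous `S_n`-equivariant maps `ℝ^n → ℝ^n`.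
(`UClassRep σ (ConvC n) (d - 2)` is the universality class of `d` copies of `C`.) -/
theorem conv_universality_class_eq_pointwise
    (n : ℕ) (hn : 1 ≤ n) (σ : ℝ → ℝ) (hσc : Continuous σ) (hσp : NotPolynomial σ)
    (d : ℕ) (hd : 2 ≤ d) :
    (UClassRep σ (ConvC n) (d - 2)
      = { F : (Fin n → ℝ) → (Fin n → ℝ) |
          ∃ f : ℝ → ℝ, Continuous f ∧ F = fun v i => f (v i) }) ∧
    (2 ≤ n → UClassRep σ (ConvC n) (d - 2)
      ⊂ { F : (Fin n → ℝ) → (Fin n → ℝ) | Continuous F ∧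
          ∀ (g : Equiv.Perm (Fin n)) (v : Fin n → ℝ),
            F (fun i => v (g⁻¹ i)) = fun i => F v (g⁻¹ i) }) := by
  have : NeZero n := ⟨Nat.one_le_iff_ne_zero.1 hn⟩
  have hclass : UClassRep σ (ConvC n) (d - 2) = pointwiseMaps (Fin n) Set.univ :=
    UClassRep_ConvC_eq_pointwiseMaps n (σ := ⟨σ, hσc⟩) hσp (d - 2)
  rw [hclass]
  refine ⟨pointwiseMaps_univ_eq (Fin n), fun hn2 => ?_⟩
  have : Nontrivial (Fin n) := Fin.nontrivial_iff_two_le.2 hn2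
  exact pointwiseMaps_ssubset_equivariant
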